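/- Let h = (h_{ijk}) be a fully symmetric real 3-tensor with indices in {1, …, 2n}, and define Q̃₃(h) as the sum over triples (i, j, k) with i odd < j odd < k odd of: 6(h_{ijk}² + h_{ijk'}² + h_{ij'k}² + h_{ij'k'}² + h_{i'jk}² + h_{i'jk'}² + h_{i'j'k}² + h_{i'j'k'}²) + 4(h_{j'ki} h_{k'ji} − h_{jki} h_{k'j'i} + h_{j'ki'} h_{k'ji'} − h_{jki'} h_{k'j'i'}) + 4(h_{i'kj} h_{k'ij} − h_{ikj} h_{k'i'j} + h_{i'kj'} h_{k'ij'} − h_{ikj'} h_{k'i'j'}) + 4(h_{i'jk} h_{j'ik} − h_{ijk} h_{j'i'k} + h_{i'jk'} h_{j'ik'} − h_{ijk'} h_{j'i'k'}). Then Q̃₃(h) ≥ 4 Σ_{i odd < j odd < k odd} (h_{ijk}² + h_{ijk'}² + h_{ij'k}² + h_{ij'k'}² + h_{i'jk}² + h_{i'jk'}² + h_{i'j'k}² + h_{i'j'k'}²). -/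

import Mathlib

/-!
The inequality holds summand by summand. For a fixed triple, full symmetry leaves eight
variables `h_{ijk}, …, h_{i'j'k'}`, and the mixed products only couple entries with the same
parity of the number of primes. In each of the two groups of four, after a sign change of one
variable, the mixed products are all six pairwise products, so completing the square gives
`q3body = 4 Σ h² + 2 (h_{ij'k'} + h_{i'jk'} + h_{i'j'k} - h_{ijk})²
  + 2 (h_{ijk'} + h_{ij'k} + h_{i'jk} - h_{i'j'k'})²`; see `q3body_eq`.
-/

open Finset

/-- The involution `i ↦ i'` on `Fin (2n)` (0-indexed: `i' = i+1` for even `i`,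
`i' = i−1` for odd `i`). -/
def pr (n : ℕ) (i : Fin (2 * n)) : Fin (2 * n) :=
  if _h : (i : ℕ) % 2 = 0 then ⟨(i : ℕ) + 1, by have := i.isLt; omega⟩
  else ⟨(i : ℕ) - 1, by have := i.isLt; omega⟩

/-- The summand of `Q̃₃` associated to the triple `(i, j, k)`. -/
def q3body (n : ℕ) (h : Fin (2 * n) → Fin (2 * n) → Fin (2 * n) → ℝ)
    (i j k : Fin (2 * n)) : ℝ :=
  let i' := pr n i
  let j' := pr n j
  let k' := pr n k
  6 * (h i j k ^ 2 + h i j k' ^ 2 + h i j' k ^ 2 + h i j' k' ^ 2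
      + h i' j k ^ 2 + h i' j k' ^ 2 + h i' j' k ^ 2 + h i' j' k' ^ 2)
    + 4 * (h j' k i * h k' j i - h j k i * h k' j' i
      + h j' k i' * h k' j i' - h j k i' * h k' j' i')
    + 4 * (h i' k j * h k' i j - h i k j * h k' i' j
      + h i' k j' * h k' i j' - h i k j' * h k' i' j')
    + 4 * (h i' j k * h j' i k - h i j k * h j' i' k
      + h i' j k' * h j' i k' - h i j k' * h j' i' k')

/-- The sum-of-squares decomposition of a single summand. -/
lemma q3body_eq (n : ℕ) (h : Fin (2 * n) → Fin (2 * n) → Fin (2 * n) → ℝ)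
    (hsym1 : ∀ i j k, h i j k = h j i k)
    (hsym2 : ∀ i j k, h i j k = h i k j) (i j k : Fin (2 * n)) :
    q3body n h i j k =
      4 * (h i j k ^ 2 + h i j (pr n k) ^ 2 + h i (pr n j) k ^ 2
            + h i (pr n j) (pr n k) ^ 2 + h (pr n i) j k ^ 2
            + h (pr n i) j (pr n k) ^ 2 + h (pr n i) (pr n j) k ^ 2
            + h (pr n i) (pr n j) (pr n k) ^ 2)
      + 2 * (h i (pr n j) (pr n k) + h (pr n i) j (pr n k) + h (pr n i) (pr n j) k
          - h i j k) ^ 2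
      + 2 * (h i j (pr n k) + h i (pr n j) k + h (pr n i) j k
          - h (pr n i) (pr n j) (pr n k)) ^ 2 := by
  have r1 : ∀ x y z, h y z x = h x y z := fun x y z => by rw [hsym2 y z x, hsym1 y x z]
  have r2 : ∀ x y z, h z y x = h x y z := fun x y z => by rw [hsym1 z y x, r1 x y z |>.symm, hsym2]
  have r3 : ∀ x y z, h z x y = h x y z := fun x y z => by rw [hsym1 z x y, hsym2]
  simp only [q3body]
  generalize pr n i = i'
  generalize pr n j = j'
  generalize pr n k = k'
  rw [r1 i j' k, r2 i j k', r1 i j k, r2 i j' k', r1 i' j' k, r2 i' j k', r1 i' j k, r2 i' j' k',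
    ← hsym2 i' j k, r3 i j k', ← hsym2 i j k, r3 i' j k', ← hsym2 i' j' k, r3 i j' k',
    ← hsym2 i j' k, r3 i' j' k',
    ← hsym1 i j' k, ← hsym1 i' j' k, ← hsym1 i j' k', ← hsym1 i' j' k']
  ring

/-- For a fully symmetric real 3-tensor `h`, the quadratic form
`Q̃₃(h)`, summed over triples `i odd < j odd < k odd`, is bounded below by
`4 Σ_{i odd < j odd < k odd} (h_{ijk}² + h_{ijk'}² + h_{ij'k}² + h_{ij'k'}²
 + h_{i'jk}² + h_{i'jk'}² + h_{i'j'k}² + h_{i'j'k'}²)`.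
("odd" refers to the paper's 1-based indexing, i.e. `(i : ℕ) % 2 = 0` here.) -/
theorem Q3_lower_bound (n : ℕ)
    (h : Fin (2 * n) → Fin (2 * n) → Fin (2 * n) → ℝ)
    (hsym1 : ∀ i j k, h i j k = h j i k)
    (hsym2 : ∀ i j k, h i j k = h i k j) :
    (∑ i ∈ univ.filter (fun i : Fin (2 * n) => (i : ℕ) % 2 = 0),
      ∑ j ∈ univ.filter (fun j : Fin (2 * n) => (j : ℕ) % 2 = 0 ∧ i < j),
        ∑ k ∈ univ.filter (fun k : Fin (2 * n) => (k : ℕ) % 2 = 0 ∧ j < k),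
          q3body n h i j k) ≥
    4 * ∑ i ∈ univ.filter (fun i : Fin (2 * n) => (i : ℕ) % 2 = 0),
      ∑ j ∈ univ.filter (fun j : Fin (2 * n) => (j : ℕ) % 2 = 0 ∧ i < j),
        ∑ k ∈ univ.filter (fun k : Fin (2 * n) => (k : ℕ) % 2 = 0 ∧ j < k),
          (h i j k ^ 2 + h i j (pr n k) ^ 2 + h i (pr n j) k ^ 2
            + h i (pr n j) (pr n k) ^ 2 + h (pr n i) j k ^ 2
            + h (pr n i) j (pr n k) ^ 2 + h (pr n i) (pr n j) k ^ 2
            + h (pr n i) (pr n j) (pr n k) ^ 2) := by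
  simp only [Finset.mul_sum, ge_iff_le]
  refine Finset.sum_le_sum fun i _ => Finset.sum_le_sum fun j _ => Finset.sum_le_sum fun k _ => ?_
  rw [q3body_eq n h hsym1 hsym2]
  nlinarith [sq_nonneg (h i (pr n j) (pr n k) + h (pr n i) j (pr n k) + h (pr n i) (pr n j) k
      - h i j k), sq_nonneg (h i j (pr n k) + h i (pr n j) k + h (pr n i) j k
      - h (pr n i) (pr n j) (pr n k))]
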